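/- Let T be a bounded linear operator on a complex Hilbert space K such that ⋂_{n≥0} Tⁿ(K) = {0}. Then for every nonzero x ∈ K, the local spectrum σ_T(x) is a connected subset of ℂ. -/

import Mathlib

open Filter Topology ENNReal

noncomputable section

/-- The local resolvent set of `T` at `x`. -/
def localResolventSet {E : Type*} [NormedAddCommGroup E] [NormedSpace ℂ E]
    (T : E →L[ℂ] E) (x : E) : Set ℂ :=
  {l : ℂ | ∃ U : Set ℂ, IsOpen U ∧ l ∈ U ∧ ∃ f : ℂ → E, AnalyticOnNhd ℂ f U ∧
    ∀ m ∈ U, T (f m) - m • f m = x}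

/-- The local spectrum of `T` at `x`. -/
def localSpectrum {E : Type*} [NormedAddCommGroup E] [NormedSpace ℂ E]
    (T : E →L[ℂ] E) (x : E) : Set ℂ :=
  (localResolventSet T x)ᶜ

/-- The local spectral radius of `T` at `x`: `limsup ‖Tⁿx‖^{1/n}`. -/
def localSpecRad {E : Type*} [NormedAddCommGroup E] [NormedSpace ℂ E]
    (T : E →L[ℂ] E) (x : E) : ℝ≥0∞ :=
  limsup (fun n : ℕ => (‖(T ^ n) x‖₊ : ℝ≥0∞) ^ (1 / n : ℝ)) atTop

/-- The lower bound `m(T) = inf {‖Tx‖ : ‖x‖ = 1}` of an operator. -/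
def lowerBound {E : Type*} [NormedAddCommGroup E] [NormedSpace ℂ E]
    (T : E →L[ℂ] E) : ℝ :=
  sInf ((fun x => ‖T x‖) '' {x : E | ‖x‖ = 1})

/-- `r₁(T) = lim m(Tⁿ)^{1/n} = sup_{n ≥ 1} m(Tⁿ)^{1/n}`. -/
def r1 {E : Type*} [NormedAddCommGroup E] [NormedSpace ℂ E]
    (T : E →L[ℂ] E) : ℝ≥0∞ :=
  ⨆ n : ℕ, ENNReal.ofReal (lowerBound (T ^ (n + 1))) ^ (1 / (n + 1) : ℝ)

/-- The point spectrum: the set of eigenvalues. -/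
def pointSpectrum {E : Type*} [NormedAddCommGroup E] [NormedSpace ℂ E]
    (T : E →L[ℂ] E) : Set ℂ :=
  {l : ℂ | ∃ x : E, x ≠ 0 ∧ T x = l • x}

/-- The set of points where `T` fails the single-valued extension property. -/
def svepFails {E : Type*} [NormedAddCommGroup E] [NormedSpace ℂ E]
    (T : E →L[ℂ] E) : Set ℂ :=
  {l₀ : ℂ | ¬ ∀ r : ℝ, 0 < r → ∀ f : ℂ → E, AnalyticOnNhd ℂ f (Metric.ball l₀ r) →
      (∀ m ∈ Metric.ball l₀ r, T (f m) - m • f m = 0) →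
      ∀ m ∈ Metric.ball l₀ r, f m = 0}

/-- Dunford's condition (C). -/
def DunfordC {E : Type*} [NormedAddCommGroup E] [NormedSpace ℂ E]
    (T : E →L[ℂ] E) : Prop :=
  ∀ F : Set ℂ, IsClosed F → IsClosed {y : E | localSpectrum T y ⊆ F}

/-- Bishop's property (β). -/
def BishopBeta {E : Type*} [NormedAddCommGroup E] [NormedSpace ℂ E]
    (T : E →L[ℂ] E) : Prop :=
  ∀ U : Set ℂ, IsOpen U → ∀ f : ℕ → ℂ → E,
    (∀ m, AnalyticOnNhd ℂ (f m) U) →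
    TendstoLocallyUniformlyOn (fun m z => T (f m z) - z • f m z) 0 atTop U →
    TendstoLocallyUniformlyOn f 0 atTop U

section Shift

variable {H : Type*} [NormedAddCommGroup H] [InnerProductSpace ℂ H] [CompleteSpace H]

/-- `wB A n = B_n = A_{n-1} ⋯ A_1 A_0`, with `B_0 = 1`. -/
def wB (A : ℕ → (H →L[ℂ] H)ˣ) : ℕ → (H →L[ℂ] H)ˣ
  | 0 => 1
  | n + 1 => A n * wB A n

/-- `wBi A n = B_n⁻¹` as an operator. -/
def wBi (A : ℕ → (H →L[ℂ] H)ˣ) (n : ℕ) : H →L[ℂ] H :=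
  (((wB A n)⁻¹ : (H →L[ℂ] H)ˣ) : H →L[ℂ] H)

/-- `R₂⁺(S_u) = sup_{x ≠ 0} 1 / limsup ‖(B_n*)⁻¹ x‖^{1/n}` (with `1/0 = ∞`). -/
def R2plus (A : ℕ → (H →L[ℂ] H)ˣ) : ℝ≥0∞ :=
  ⨆ (x : H) (_ : x ≠ 0),
    (limsup (fun n : ℕ =>
      (‖ContinuousLinearMap.adjoint (wBi A n) x‖₊ : ℝ≥0∞) ^ (1 / n : ℝ)) atTop)⁻¹

/-- `R₂⁻(S_u) = inf_{x ≠ 0} 1 / limsup ‖(B_n*)⁻¹ x‖^{1/n}` (with `1/0 = ∞`). -/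
def R2minus (A : ℕ → (H →L[ℂ] H)ˣ) : ℝ≥0∞ :=
  ⨅ (x : H) (_ : x ≠ 0),
    (limsup (fun n : ℕ =>
      (‖ContinuousLinearMap.adjoint (wBi A n) x‖₊ : ℝ≥0∞) ^ (1 / n : ℝ)) atTop)⁻¹

/-- `R₃⁺(S_u) = sup_{x ≠ 0} limsup ‖B_n x‖^{1/n}`. -/
def R3plus (A : ℕ → (H →L[ℂ] H)ˣ) : ℝ≥0∞ :=
  ⨆ (x : H) (_ : x ≠ 0),
    limsup (fun n : ℕ => (‖(wB A n : H →L[ℂ] H) x‖₊ : ℝ≥0∞) ^ (1 / n : ℝ)) atTop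

/-- `R₃⁻(S_u) = inf_{x ≠ 0} limsup ‖B_n x‖^{1/n}`. -/
def R3minus (A : ℕ → (H →L[ℂ] H)ˣ) : ℝ≥0∞ :=
  ⨅ (x : H) (_ : x ≠ 0),
    limsup (fun n : ℕ => (‖(wB A n : H →L[ℂ] H) x‖₊ : ℝ≥0∞) ^ (1 / n : ℝ)) atTop

/-- `r₂(S_u) = 1 / limsup ‖B_n⁻¹‖^{1/n}` (with `1/0 = ∞`). -/
def r2 (A : ℕ → (H →L[ℂ] H)ˣ) : ℝ≥0∞ :=
  (limsup (fun n : ℕ => (‖wBi A n‖₊ : ℝ≥0∞) ^ (1 / n : ℝ)) atTop)⁻¹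

/-- `r₃(S_u) = 1 / liminf ‖B_n⁻¹‖^{1/n}` (with `1/0 = ∞`). -/
def r3 (A : ℕ → (H →L[ℂ] H)ˣ) : ℝ≥0∞ :=
  (liminf (fun n : ℕ => (‖wBi A n‖₊ : ℝ≥0∞) ^ (1 / n : ℝ)) atTop)⁻¹

/-- `R_𝒜(x) = 1 / limsup ‖B_n⁻¹ x_n‖^{1/n}` (with `1/0 = ∞`). -/
def RA (A : ℕ → (H →L[ℂ] H)ˣ) (x : lp (fun _ : ℕ => H) 2) : ℝ≥0∞ :=
  (limsup (fun n : ℕ => (‖wBi A n (x n)‖₊ : ℝ≥0∞) ^ (1 / n : ℝ)) atTop)⁻¹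

end Shift

/-- Twice the d-bar derivative. -/
def dbar2 (φ : ℂ → ℂ) (z : ℂ) : ℂ := fderiv ℝ φ z 1 + Complex.I * fderiv ℝ φ z Complex.I

open MeasureTheory in
lemma polar_integrable (G : ℝ × ℝ → ℂ) (hG : Continuous G) (M : ℝ)
    (hM : ∀ p : ℝ × ℝ, M < p.1 → G p = 0) :
    IntegrableOn G (Set.Ioi (0:ℝ) ×ˢ Set.Ioo (-Real.pi) Real.pi) (volume.prod volume) := by
  have hc : IsCompact (Set.Icc (0:ℝ) M ×ˢ Set.Icc (-Real.pi) Real.pi) :=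
    isCompact_Icc.prod isCompact_Icc
  have h1 : IntegrableOn G (Set.Icc (0:ℝ) M ×ˢ Set.Icc (-Real.pi) Real.pi) (volume.prod volume) :=
    hG.continuousOn.integrableOn_compact hc
  refine h1.of_forall_sdiff_eq_zero (measurableSet_Ioi.prod measurableSet_Ioo) ?_
  rintro ⟨r, t⟩ ⟨⟨hr, ht⟩, hn⟩
  apply hM
  by_contra hlt
  apply hn
  simp only [Set.mem_Ioi, Set.mem_Ioo] at hr ht
  exact ⟨⟨le_of_lt hr, not_lt.1 hlt⟩, ⟨ht.1.le, ht.2.le⟩⟩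

open MeasureTheory in
lemma cauchy_pompeiu_zero (φ : ℂ → ℂ) (hφ : ContDiff ℝ 1 φ) (hc : HasCompactSupport φ) :
    ∫ z, dbar2 φ z * z⁻¹ = - (2 * Real.pi) * φ 0 := by
  obtain ⟨M, hM⟩ : ∃ M : ℝ, ∀ z : ℂ, M < ‖z‖ → z ∉ tsupport φ := by
    obtain ⟨M, hM⟩ := hc.isCompact.isBounded.exists_norm_le
    exact ⟨M, fun z hz hz' => absurd (hM z hz') (not_le.2 hz)⟩
  have hM0 : ∀ z : ℂ, M < ‖z‖ → φ z = 0 := fun z hz => image_eq_zero_of_notMem_tsupport (hM z hz)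
  have hM1 : ∀ z : ℂ, M < ‖z‖ → fderiv ℝ φ z = 0 := fun z hz =>
    image_eq_zero_of_notMem_tsupport fun h => hM z hz (tsupport_fderiv_subset ℝ h)
  have hd : Continuous (fderiv ℝ φ) := hφ.continuous_fderiv (by norm_num)
  let e : ℝ → ℂ := fun t => (Real.cos t + Real.sin t * Complex.I : ℂ)
  have he : Continuous e := by fun_prop
  have hen : ∀ t, ‖e t‖ = 1 := fun t => by
    simp only [e]
    rw [Complex.ofReal_cos, Complex.ofReal_sin, ← Complex.exp_mul_I]
    exact Complex.norm_exp_ofReal_mul_I t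
  have hnorm : ∀ r t : ℝ, ‖(r:ℂ) * e t‖ = |r| := fun r t => by
    rw [norm_mul, hen, mul_one, Complex.norm_real, Real.norm_eq_abs]
  let R : ℝ × ℝ → ℂ := fun p => fderiv ℝ φ (p.1 * e p.2) (e p.2)
  let Θ : ℝ × ℝ → ℂ := fun p => Complex.I * fderiv ℝ φ (p.1 * e p.2) (Complex.I * e p.2)
  have hR : Continuous R := by
    have : Continuous fun p : ℝ × ℝ => fderiv ℝ φ (p.1 * e p.2) := hd.comp (by fun_prop)
    exact this.clm_apply (by fun_prop)
  have hΘ : Continuous Θ := by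
    have : Continuous fun p : ℝ × ℝ => fderiv ℝ φ (p.1 * e p.2) := hd.comp (by fun_prop)
    exact continuous_const.mul (this.clm_apply (by fun_prop))
  have hz : ∀ p : ℝ × ℝ, M < p.1 → fderiv ℝ φ (p.1 * e p.2) = 0 := fun p hp => hM1 _ (by
    rw [hnorm]; exact hp.trans_le (le_abs_self _))
  have hRi := polar_integrable R hR M (fun p hp => by simp [R, hz p hp])
  have hΘi := polar_integrable Θ hΘ M (fun p hp => by simp [Θ, hz p hp])
  rw [← Complex.integral_comp_polarCoord_symm]
  have hcongr : ∫ p in polarCoord.target, p.1 • (dbar2 φ (Complex.polarCoord.symm p) *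
      (Complex.polarCoord.symm p)⁻¹) = ∫ p in Set.Ioi (0:ℝ) ×ˢ Set.Ioo (-Real.pi) Real.pi,
        (R p + Θ p) := by
    rw [polarCoord_target]
    refine setIntegral_congr_fun (measurableSet_Ioi.prod measurableSet_Ioo) ?_
    rintro ⟨r, t⟩ ⟨hr, ht⟩
    have hr' : (r:ℂ) ≠ 0 := by exact_mod_cast (ne_of_gt hr)
    have hlin : ∀ (L : ℂ →L[ℝ] ℂ) (a b : ℝ), L (a + b * Complex.I) = a * L 1 + b * L Complex.I := by
      intro L a b
      have : (a + b * Complex.I : ℂ) = a • (1:ℂ) + b • Complex.I := by simp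
      rw [this, map_add, map_smul, map_smul]; simp
    have het : e t ≠ 0 := by intro h; have := hen t; rw [h] at this; simp at this
    have hI : Complex.I * e t = ((-Real.sin t : ℝ) : ℂ) + (Real.cos t : ℝ) * Complex.I := by
      simp only [e]; push_cast; linear_combination (Complex.sin t) * Complex.I_sq
    have hsq : (Real.cos t : ℂ) ^ 2 + (Real.sin t : ℂ) ^ 2 = 1 := by
      exact_mod_cast Real.cos_sq_add_sin_sq t
    have hinv : (e t)⁻¹ = Real.cos t - Real.sin t * Complex.I := by
      apply inv_eq_of_mul_eq_one_right
      simp only [e]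
      linear_combination hsq - (Real.sin t:ℂ)^2 * Complex.I_sq
    have hs : Complex.polarCoord.symm (r, t) = r * e t := by
      rw [Complex.polarCoord_symm_apply]
    simp only [hs, R, Θ, dbar2, hI]
    rw [hlin _ (-Real.sin t)]
    conv_rhs => rw [show e t = Real.cos t + Real.sin t * Complex.I from rfl]
    rw [hlin]
    change _ = Real.cos t * fderiv ℝ φ (r * e t) 1 + Real.sin t * fderiv ℝ φ (r * e t) Complex.I +
      Complex.I * (((-Real.sin t : ℝ) : ℂ) * fderiv ℝ φ (r * e t) 1 
        + Real.cos t * fderiv ℝ φ (r * e t) Complex.I)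
    generalize fderiv ℝ φ (r * e t) 1 = a
    generalize fderiv ℝ φ (r * e t) Complex.I = b
    rw [mul_inv, hinv, Complex.real_smul]
    field_simp
    push_cast
    linear_combination (-(b * (Complex.sin t))) * Complex.I_sq
  rw [hcongr, Measure.volume_eq_prod]
  rw [integral_add hRi hΘi]
  have h2 : ∫ p in Set.Ioi (0:ℝ) ×ˢ Set.Ioo (-Real.pi) Real.pi, Θ p ∂(volume.prod volume) = 0 := by
    rw [setIntegral_prod _ hΘi]
    rw [setIntegral_congr_fun (g := fun _ => (0:ℂ)) measurableSet_Ioi]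
    · simp
    intro r hr
    have hr' : (r:ℂ) ≠ 0 := by exact_mod_cast (ne_of_gt hr)
    change ∫ t in Set.Ioo (-Real.pi) Real.pi, Θ (r, t) = 0
    rw [← integral_Ioc_eq_integral_Ioo, ← intervalIntegral.integral_of_le (by linarith [Real.pi_pos])]
    have hder : ∀ t : ℝ, HasDerivAt (fun t : ℝ => Complex.I * (r:ℂ)⁻¹ * φ (r * e t)) (Θ (r, t)) t := by
      intro t
      have h1 : HasDerivAt e (Complex.I * e t) t := by
        have hcos := (Real.hasDerivAt_cos t).ofReal_comp
        have hsin := (Real.hasDerivAt_sin t).ofReal_comp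
        have := hcos.add (hsin.mul_const Complex.I)
        refine this.congr_deriv ?_
        simp only [e]; push_cast; linear_combination (-Complex.sin t) * Complex.I_sq
      have h2 := ((hφ.differentiable (by norm_num)) (r * e t)).hasFDerivAt.comp_hasDerivAt t
        (h1.const_mul (r:ℂ))
      have h3 := h2.const_mul (Complex.I * (r:ℂ)⁻¹)
      refine h3.congr_deriv ?_
      have : (r:ℂ) * (Complex.I * e t) = r • (Complex.I * e t) := by simp
      rw [this, map_smul, Complex.real_smul]
      simp only [Θ]
      field_simp
    rw [intervalIntegral.integral_eq_sub_of_hasDerivAt (fun t _ => hder t)]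
    · simp [e]
    · exact (hΘ.comp (by fun_prop : Continuous fun t : ℝ => (r, t))).intervalIntegrable _ _
  have h1 : ∫ p in Set.Ioi (0:ℝ) ×ˢ Set.Ioo (-Real.pi) Real.pi, R p ∂(volume.prod volume)
      = - (2 * Real.pi) * φ 0 := by
    have hswap := setIntegral_prod_swap (μ := volume) (ν := volume) (Set.Ioi (0:ℝ)) (Set.Ioo (-Real.pi) Real.pi) R
    rw [← hswap, setIntegral_prod (fun z => R z.swap) hRi.swap]
    rw [setIntegral_congr_fun (g := fun _ => - φ 0) measurableSet_Ioo]
    · rw [setIntegral_const]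
      simp [Measure.real, Real.volume_Ioo]
      rw [ENNReal.toReal_ofReal (by linarith [Real.pi_pos])]
      left; push_cast; ring
    intro t ht
    change ∫ r in Set.Ioi (0:ℝ), R (r, t) = _
    have hder : ∀ r : ℝ, HasDerivAt (fun r : ℝ => φ (r * e t)) (R (r, t)) r := by
      intro r
      have h1 : HasDerivAt (fun r : ℝ => (r:ℂ) * e t) (e t) r := by
        simpa using (Complex.ofRealCLM.hasDerivAt (x := r)).mul_const (e t)
      exact ((hφ.differentiable (by norm_num)) (r * e t)).hasFDerivAt.comp_hasDerivAt r h1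
    have := integral_Ioi_of_hasDerivAt_of_tendsto' (a := (0:ℝ)) (m := (0:ℂ)) (fun r _ => hder r) ?_ ?_
    · rw [this]; simp
    · have hcont : Continuous fun r : ℝ => R (r, t) := hR.comp (by fun_prop)
      refine (hcont.continuousOn.integrableOn_compact (isCompact_Icc (a := (0:ℝ)) (b := M))).of_forall_sdiff_eq_zero
        measurableSet_Ioi ?_
      rintro r ⟨hr, hn⟩
      have : M < r := by
        by_contra h
        exact hn ⟨le_of_lt hr, not_lt.1 h⟩
      simp [R, hz (r, t) this]
    · refine tendsto_const_nhds.congr' ?_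
      filter_upwards [eventually_gt_atTop M] with r hr
      rw [hM0]
      rw [hnorm]; exact hr.trans_le (le_abs_self _)
  rw [h1, h2, add_zero]

open MeasureTheory in
lemma cauchy_pompeiu (φ : ℂ → ℂ) (hφ : ContDiff ℝ 1 φ) (hc : HasCompactSupport φ) (m : ℂ) :
    ∫ z, dbar2 φ z * (z - m)⁻¹ = - (2 * Real.pi) * φ m := by
  have h := cauchy_pompeiu_zero (fun z => φ (z + m)) (hφ.comp (by fun_prop))
    (hc.comp_homeomorph (Homeomorph.addRight m))
  rw [← integral_add_right_eq_self _ m]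
  simp only [zero_add] at h
  rw [← h]
  congr 1
  ext z
  simp [dbar2, fderiv_comp_add_right]

section Local
variable {E : Type*} [NormedAddCommGroup E] [NormedSpace ℂ E] [CompleteSpace E]

lemma isOpen_lrs (T : E →L[ℂ] E) (x : E) : IsOpen (localResolventSet T x) := by
  rw [isOpen_iff_mem_nhds]
  rintro l ⟨U, hU, hl, f, hf, h⟩
  filter_upwards [hU.mem_nhds hl] with m hm
  exact ⟨U, hU, hm, f, hf, h⟩

lemma mem_lrs_of_lt (T : E →L[ℂ] E) (x : E) (l : ℂ)
    (hl : ‖T‖ * ‖(1 : E →L[ℂ] E)‖ < ‖l‖) : l ∈ localResolventSet T x := by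
  have hU : IsOpen (resolventSet ℂ T) := spectrum.isOpen_resolventSet T
  refine ⟨resolventSet ℂ T, hU, spectrum.mem_resolventSet_of_norm_lt_mul hl,
    fun m => - (resolvent T m) x, ?_, ?_⟩
  · apply DifferentiableOn.analyticOnNhd _ hU
    intro m hm
    have h := (spectrum.hasDerivAt_resolvent_const_left hm).differentiableAt
    exact (h.clm_apply (differentiableAt_const x)).neg.differentiableWithinAt
  · intro m hm
    have h : (algebraMap ℂ (E →L[ℂ] E) m - T) * resolvent T m = 1 := by
      rw [resolvent]; exact Ring.mul_inverse_cancel _ hm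
    have h2 := congrArg (fun L : E →L[ℂ] E => L x) h
    simp only [ContinuousLinearMap.mul_apply, ContinuousLinearMap.sub_apply,
      ContinuousLinearMap.one_apply, Algebra.algebraMap_eq_smul_one,
      ContinuousLinearMap.smul_apply] at h2
    rw [map_neg, smul_neg, neg_sub_neg]
    exact h2

lemma lrs_step (T : E →L[ℂ] E) (y : E) (h : (0:ℂ) ∈ localResolventSet T y) :
    ∃ w, T w = y ∧ (0:ℂ) ∈ localResolventSet T w := by
  obtain ⟨U, hU, h0, f, hf, he⟩ := h
  have hw : T (f 0) = y := by simpa using he 0 h0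
  have hd : DifferentiableOn ℂ (dslope f 0) U :=
    (Complex.differentiableOn_dslope (hU.mem_nhds h0)).2 hf.differentiableOn
  refine ⟨f 0, hw, U, hU, h0, dslope f 0, hd.analyticOnNhd hU, ?_⟩
  have hne : ∀ m ∈ U, m ≠ 0 → T (dslope f 0 m) - m • dslope f 0 m = f 0 := by
    intro m hm hm0
    have h1 : m • dslope f 0 m = f m - f 0 := by
      simpa using sub_smul_dslope f 0 m
    have h2 := he m hm
    have h3 : m • (T (dslope f 0 m) - m • dslope f 0 m) = m • f 0 := by
      rw [smul_sub, ← map_smul, h1, map_sub, hw, smul_sub, ← h2]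
      abel
    exact smul_right_injective E hm0 h3
  intro m hm
  by_cases hm0 : m = 0
  · subst hm0
    have hc : ContinuousAt (fun m => T (dslope f 0 m) - m • dslope f 0 m) 0 := by
      have hc0 : ContinuousAt (dslope f 0) 0 := (hd.continuousOn).continuousAt (hU.mem_nhds h0)
      exact (T.continuous.continuousAt.comp hc0).sub (continuousAt_id.smul hc0)
    have t1 := hc.tendsto.mono_left (nhdsWithin_le_nhds (s := {0}ᶜ))
    have t2 : Tendsto (fun m => T (dslope f 0 m) - m • dslope f 0 m) (𝓝[≠] (0:ℂ)) (𝓝 (f 0)) := by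
      refine tendsto_const_nhds.congr' ?_
      filter_upwards [nhdsWithin_le_nhds (hU.mem_nhds h0), self_mem_nhdsWithin] with m hm hm0
      exact (hne m hm hm0).symm
    exact tendsto_nhds_unique t1 t2
  · exact hne m hm hm0

lemma lrs_zero (T : E →L[ℂ] E)
    (hT : (⋂ n : ℕ, Set.range (⇑(T ^ n) : E → E)) = {0}) (y : E)
    (h : (0:ℂ) ∈ localResolventSet T y) : y = 0 := by
  have key : ∀ n : ℕ, ∃ w, (T ^ n) w = y ∧ (0:ℂ) ∈ localResolventSet T w := by
    intro n
    induction n with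
    | zero => exact ⟨y, by simp, h⟩
    | succ n ih =>
      obtain ⟨w, hw, h0⟩ := ih
      obtain ⟨v, hv, h1⟩ := lrs_step T w h0
      exact ⟨v, by rw [pow_succ, ContinuousLinearMap.mul_apply, hv, hw], h1⟩
  have : y ∈ (⋂ n : ℕ, Set.range (⇑(T ^ n) : E → E)) := by
    rw [Set.mem_iInter]
    intro n
    obtain ⟨w, hw, -⟩ := key n
    exact ⟨w, hw⟩
  rw [hT] at this
  exact this

lemma eig_zero (T : E →L[ℂ] E)
    (hT : (⋂ n : ℕ, Set.range (⇑(T ^ n) : E → E)) = {0}) (y : E) (l : ℂ) (hl : l ≠ 0)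
    (h : T y = l • y) : y = 0 := by
  have key : ∀ n : ℕ, (T ^ n) y = l ^ n • y := by
    intro n
    induction n with
    | zero => simp
    | succ n ih => rw [pow_succ, ContinuousLinearMap.mul_apply, h, map_smul, ih, smul_smul, pow_succ']
  have : y ∈ (⋂ n : ℕ, Set.range (⇑(T ^ n) : E → E)) := by
    rw [Set.mem_iInter]
    intro n
    refine ⟨(l ^ n)⁻¹ • y, ?_⟩
    rw [map_smul, key, smul_smul, inv_mul_cancel₀ (pow_ne_zero _ hl), one_smul]
  rw [hT] at this
  exact this

lemma smul_inv_bound (F : ℂ → E) (μ₀ : ℂ) (hμ : μ₀ ∉ tsupport F) :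
    ∃ ε > 0, ∀ m ∈ Metric.ball μ₀ ε, ∀ a, F a = 0 ∨ ε ≤ ‖a - m‖ := by
  obtain ⟨ε, hε, hb⟩ := Metric.isOpen_iff.1 (isClosed_tsupport F).isOpen_compl μ₀ hμ
  refine ⟨ε / 2, by positivity, fun m hm a => ?_⟩
  by_cases ha : a ∈ tsupport F
  · right
    have h1 : ε ≤ dist a μ₀ := by
      by_contra h
      exact hb (Metric.mem_ball.2 (not_le.1 h)) ha
    have h2 := dist_triangle a m μ₀
    rw [Metric.mem_ball] at hm
    rw [← dist_eq_norm]
    linarith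
  · exact Or.inl (image_eq_zero_of_notMem_tsupport ha)

open MeasureTheory in
lemma cauchy_integrable (F : ℂ → E) (hF : Continuous F) (hc : HasCompactSupport F)
    (m : ℂ) (hm : m ∉ tsupport F) : Integrable (fun a => (a - m)⁻¹ • F a) := by
  obtain ⟨ε, hε, hb⟩ := smul_inv_bound F m hm
  refine ((hF.integrable_of_hasCompactSupport hc).norm.const_mul ε⁻¹).mono' ?_ ?_
  · exact (Measurable.aestronglyMeasurable (by fun_prop)).smul hF.aestronglyMeasurable
  · refine Eventually.of_forall fun a => ?_
    rcases hb m (Metric.mem_ball_self hε) a with h | h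
    · simp [h]
    · rw [norm_smul, norm_inv]
      gcongr

open MeasureTheory in
lemma cauchy_diff (F : ℂ → E) (hF : Continuous F) (hc : HasCompactSupport F) :
    DifferentiableOn ℂ (fun m => ∫ a, (a - m)⁻¹ • F a) (tsupport F)ᶜ := by
  intro m hm
  obtain ⟨ε, hε, hb⟩ := smul_inv_bound F m hm
  have := hasDerivAt_integral_of_dominated_loc_of_deriv_le (μ := volume)
    (F := fun m a => (a - m)⁻¹ • F a) (F' := fun m a => ((a - m) ^ 2)⁻¹ • F a)
    (bound := fun a => (ε ^ 2)⁻¹ * ‖F a‖) (x₀ := m)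
    (Metric.ball_mem_nhds m hε) ?_ (cauchy_integrable F hF hc m hm) ?_ ?_ ?_ ?_
  · exact this.2.differentiableAt.differentiableWithinAt
  · exact Eventually.of_forall fun m =>
      (Measurable.aestronglyMeasurable (by fun_prop)).smul hF.aestronglyMeasurable
  · exact (Measurable.aestronglyMeasurable (by fun_prop)).smul hF.aestronglyMeasurable
  · refine Eventually.of_forall fun a x hx => ?_
    rcases hb x hx a with h | h
    · simp [h]
    · rw [norm_smul, norm_inv, norm_pow]
      gcongr
  · exact (hF.integrable_of_hasCompactSupport hc).norm.const_mul _
  · refine Eventually.of_forall fun a x hx => ?_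
    rcases hb x hx a with h | h
    · simpa [h] using hasDerivAt_const x (0:E)
    · have hne : a - x ≠ 0 := by
        intro h0; rw [h0, norm_zero] at h; linarith
      have h1 : HasDerivAt (fun x => (a - x)⁻¹) (((a - x) ^ 2)⁻¹) x := by
        have := ((hasDerivAt_id x).const_sub a).inv hne
        refine this.congr_deriv ?_
        simp
      exact h1.smul_const (F a)

/-- Core: if the local spectrum splits, the part away from zero is empty. -/
lemma core (T : E →L[ℂ] E)
    (hT : (⋂ n : ℕ, Set.range (⇑(T ^ n) : E → E)) = {0}) (x : E) 
    (A B : Set ℂ) (hA : IsClosed A) (hB : IsCompact B) (hAB : Disjoint A B)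
    (h0 : (0:ℂ) ∈ A) (hs : localSpectrum T x ⊆ A ∪ B) (b : ℂ) (hb : b ∈ B) :
    b ∈ localResolventSet T x := by
  classical
  -- global local-resolvent function
  have hex : ∀ l : ℂ, ∃ y : E, l ∈ localResolventSet T x → T y - l • y = x := by
    intro l
    by_cases h : l ∈ localResolventSet T x
    · obtain ⟨U, hU, hl, f, hf, he⟩ := h
      exact ⟨f l, fun _ => he l hl⟩
    · exact ⟨0, fun h' => absurd h' h⟩
  choose f hf using hex
  have hO : IsOpen (A ∪ B)ᶜ := (hA.union hB.isClosed).isOpen_compl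
  have hsub : ∀ l ∈ (A ∪ B)ᶜ, l ∈ localResolventSet T x := by
    intro l hl
    by_contra h
    exact hl (hs h)
  have hfc : ContinuousOn f (A ∪ B)ᶜ := by
    intro l hl
    obtain ⟨U, hU, hlU, g, hg, he⟩ := hsub l hl
    have : f =ᶠ[𝓝 l] g := by
      filter_upwards [hU.mem_nhds hlU, hO.mem_nhds hl] with m hm hm'
      have hm0 : m ≠ 0 := by rintro rfl; exact hm' (Or.inl h0)
      have e1 := hf m (hsub m hm')
      have e2 := he m hm
      rw [← sub_eq_zero]
      apply eig_zero T hT _ m hm0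
      rw [map_sub, smul_sub, sub_eq_sub_iff_sub_eq_sub, e1, e2]
    exact ((hg l hlU).continuousAt.congr this.symm).continuousWithinAt
  -- cutoff function
  obtain ⟨N, hN, hBN, hAN⟩ : ∃ N : Set ℂ, IsCompact N ∧ B ⊆ interior N ∧ N ⊆ Aᶜ :=
    exists_compact_between hB hA.isOpen_compl hAB.symm.subset_compl_right
  obtain ⟨φ, hφ0, hφ1, -⟩ := exists_contMDiffMap_zero_one_nhds_of_isClosed
    (n := 1) (modelWithCornersSelf ℝ ℂ)
    (s := (interior N)ᶜ) (t := B) isOpen_interior.isClosed_compl hB.isClosed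
    (Set.disjoint_left.2 fun z hz hz' => hz (hBN hz'))
  let ψ : ℂ → ℂ := fun z => (φ z : ℂ)
  have hψ : ContDiff ℝ 1 ψ := Complex.ofRealCLM.contDiff.comp φ.contMDiff.contDiff
  rw [eventually_nhdsSet_iff_forall] at hφ0 hφ1
  have hAψ : ∀ z ∈ A, ψ =ᶠ[𝓝 z] fun _ => 0 := fun z hz => by
    filter_upwards [hφ0 z (fun h => hAN (interior_subset h) hz)] with w hw
    simp [ψ, hw]
  have hBψ : ∀ z ∈ B, ψ =ᶠ[𝓝 z] fun _ => 1 := fun z hz => by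
    filter_upwards [hφ1 z hz] with w hw
    simp [ψ, hw]
  have hcψ : HasCompactSupport ψ := HasCompactSupport.intro hN fun z hz => by
    have := (hφ0 z (fun h => hz (interior_subset h))).self_of_nhds
    simp [ψ, this]
  have hdc : Continuous (dbar2 ψ) := by
    have hd : Continuous (fderiv ℝ ψ) := hψ.continuous_fderiv (by norm_num)
    unfold dbar2
    fun_prop
  have hdconst : ∀ (z c : ℂ), (ψ =ᶠ[𝓝 z] fun _ => c) → z ∉ tsupport (dbar2 ψ) := by
    intro z c h
    rw [notMem_tsupport_iff_eventuallyEq]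
    filter_upwards [h.eventuallyEq_nhds] with w hw
    simp [dbar2, hw.fderiv_eq]
  have hdcs : HasCompactSupport (dbar2 ψ) :=
    HasCompactSupport.intro hcψ.isCompact fun z hz => by
      have := (notMem_tsupport_iff_eventuallyEq.1 hz)
      exact image_eq_zero_of_notMem_tsupport (hdconst z 0 this)
  have hsupp : tsupport (dbar2 ψ) ⊆ (A ∪ B)ᶜ := by
    rintro z hz (h | h)
    · exact hdconst z 0 (hAψ z h) hz
    · exact hdconst z 1 (hBψ z h) hz
  let F : ℂ → E := fun z => dbar2 ψ z • f z
  have hFs : tsupport F ⊆ tsupport (dbar2 ψ) := tsupport_smul_subset_left _ _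
  have hF : Continuous F :=
    (hdc.continuousOn.smul hfc).continuous_of_tsupport_subset hO (hFs.trans hsupp)
  have hFc : HasCompactSupport F := hdcs.smul_right
  let g : ℂ → E := fun m => ∫ a, (a - m)⁻¹ • F a
  have hg : DifferentiableOn ℂ g (tsupport (dbar2 ψ))ᶜ :=
    (cauchy_diff F hF hFc).mono (Set.compl_subset_compl.2 hFs)
  let v : E := ∫ a, F a
  have hident : ∀ m ∉ tsupport (dbar2 ψ), T (g m) - m • g m = v - (2 * Real.pi * ψ m) • x := by
    intro m hm
    have hi := cauchy_integrable F hF hFc m (fun h => hm (hFs h))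
    have hi2 := cauchy_integrable (dbar2 ψ) hdc hdcs m hm
    have hi3 : MeasureTheory.Integrable (fun a => (dbar2 ψ a * (a - m)⁻¹) • x) := by
      refine MeasureTheory.Integrable.smul_const ?_ x
      refine hi2.congr (Eventually.of_forall fun a => ?_)
      simp [mul_comm]
    have hcp : ∫ a, (dbar2 ψ a * (a - m)⁻¹) • x = (-(2 * Real.pi) * ψ m) • x := by
      rw [integral_smul_const, cauchy_pompeiu ψ hψ hcψ m]
    have e1 : T (g m) - m • g m = ∫ a, (T - m • (1 : E →L[ℂ] E)) ((a - m)⁻¹ • F a) := by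
      rw [ContinuousLinearMap.integral_comp_comm _ hi]
      simp [g]
    have e2 : ∀ a, (T - m • (1 : E →L[ℂ] E)) ((a - m)⁻¹ • F a) =
        F a + (dbar2 ψ a * (a - m)⁻¹) • x := by
      intro a
      by_cases ha : a ∈ tsupport (dbar2 ψ)
      · have hne : a - m ≠ 0 := by
          intro h; rw [sub_eq_zero] at h; exact hm (h ▸ ha)
        have hfa := hf a (hsub a (hsupp ha))
        have hTf : T (f a) = x + a • f a := by rw [← hfa]; abel
        have : (1:ℂ) = (a - m)⁻¹ * (a - m) := (inv_mul_cancel₀ hne).symm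
        simp only [F, ContinuousLinearMap.sub_apply, ContinuousLinearMap.smul_apply,
          ContinuousLinearMap.one_apply, map_smul, hTf]
        have h1 : dbar2 ψ a • f a = (dbar2 ψ a * ((a - m)⁻¹ * (a - m))) • f a := by
          rw [← this, mul_one]
        rw [h1]
        module
      · have : dbar2 ψ a = 0 := image_eq_zero_of_notMem_tsupport ha
        simp [F, this]
    rw [e1]
    simp_rw [e2]
    rw [MeasureTheory.integral_add (hF.integrable_of_hasCompactSupport hFc) hi3, hcp]
    rw [neg_mul, neg_smul, ← sub_eq_add_neg]
  have hgen : ∀ z c : ℂ, (ψ =ᶠ[𝓝 z] fun _ => c) →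
      ∃ U : Set ℂ, IsOpen U ∧ z ∈ U ∧ AnalyticOnNhd ℂ g U ∧
        ∀ m ∈ U, T (g m) - m • g m = v - (2 * Real.pi * c) • x := by
    intro z c h
    obtain ⟨U, hU, hUo, hzU⟩ := mem_nhds_iff.1 (h : {m | ψ m = c} ∈ 𝓝 z)
    have hsub : U ⊆ (tsupport (dbar2 ψ))ᶜ := fun m hm =>
      hdconst m c (by filter_upwards [hUo.mem_nhds hm] with w hw using hU hw)
    refine ⟨U, hUo, hzU, (hg.mono hsub).analyticOnNhd hUo, fun m hm => ?_⟩
    rw [hident m (hsub hm), show ψ m = c from hU hm]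
  have hv : v = 0 := by
    obtain ⟨U, hU, hz, ha, he⟩ := hgen 0 0 (hAψ 0 h0)
    exact lrs_zero T hT v ⟨U, hU, hz, g, ha, fun m hm => by rw [he m hm]; simp⟩
  obtain ⟨U, hU, hz, ha, he⟩ := hgen b 1 (hBψ b hb)
  have hpi : (2 * Real.pi : ℂ) ≠ 0 := by
    simp [Real.pi_ne_zero]
  refine ⟨U, hU, hz, fun m => (-(2 * Real.pi : ℂ)⁻¹) • g m, ?_, fun m hm => ?_⟩
  · intro m hm
    exact analyticAt_const.smul (ha m hm)
  · rw [map_smul, smul_comm, ← smul_sub, he m hm, hv, zero_sub, smul_neg, neg_smul, neg_neg,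
      smul_smul, mul_one, inv_mul_cancel₀ hpi, one_smul]

end Local

theorem stmt2 {K : Type*} [NormedAddCommGroup K] [InnerProductSpace ℂ K] [CompleteSpace K]
    (T : K →L[ℂ] K)
    (hT : (⋂ n : ℕ, Set.range (⇑(T ^ n) : K → K)) = {0}) :
    ∀ x : K, x ≠ 0 → IsConnected (localSpectrum T x) := by
  intro x hx
  have h0 : (0:ℂ) ∈ localSpectrum T x := fun h => hx (lrs_zero T hT x h)
  have hcl : IsClosed (localSpectrum T x) := (isOpen_lrs T x).isClosed_compl
  have hcomp : IsCompact (localSpectrum T x) := by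
    refine Metric.isCompact_of_isClosed_isBounded hcl ?_
    refine (Metric.isBounded_closedBall (x := (0:ℂ))
      (r := ‖T‖ * ‖(1 : K →L[ℂ] K)‖)).subset fun l hl => ?_
    rw [mem_closedBall_zero_iff]
    by_contra h
    exact hl (mem_lrs_of_lt T x l (not_le.1 h))
  refine ⟨⟨0, h0⟩, ?_⟩
  rw [isPreconnected_iff_subset_of_fully_disjoint_closed hcl]
  intro u v hu hv hs huv
  have main : ∀ u v : Set ℂ, IsClosed u → IsClosed v → localSpectrum T x ⊆ u ∪ v →
      Disjoint u v → (0:ℂ) ∈ u → localSpectrum T x ⊆ u := by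
    intro u v hu hv hs huv h0u z hz
    by_contra hzu
    have hzv : z ∈ v := (hs hz).resolve_left hzu
    refine hz (core T hT x u (localSpectrum T x ∩ v) hu (hcomp.inter_right hv)
      (huv.mono_right Set.inter_subset_right) h0u ?_ z ⟨hz, hzv⟩)
    intro w hw
    rcases hs hw with h | h
    · exact Or.inl h
    · exact Or.inr ⟨hw, h⟩
  rcases hs h0 with h | h
  · exact Or.inl (main u v hu hv hs huv h)
  · exact Or.inr (main v u hv hu (by rwa [Set.union_comm]) huv.symm h)
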